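/- Let {S_j, j = 1, 2, ...} be a countably infinite set of pairwise distinct (n−1)-dimensional linear subspaces of ℝⁿ (n ≥ 2), and let μ be a probability measure on ℝⁿ whose orthogonal projection onto S_j is Gaussian for every j. Then μ is Gaussian: there exist a mean vector m ∈ ℝⁿ and a positive semidefinite matrix Σ such that the characteristic function of μ is t ↦ exp(i mᵀt − tᵀΣt/2); equivalently, for every a ∈ ℝⁿ the pushforward of μ under x ↦ aᵀx is a (possibly degenerate) normal distribution. -/

import Mathlib

open MeasureTheory ProbabilityTheory

open Filter Finset
open scoped Topology

/-!
Two distinct hyperplanes span the space, so every linear functional is a sum of two Gaussian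
variables and has all exponential moments; such a law is determined by its moments. It is therefore
Gaussian as soon as each central moment of order `k` equals `γₖ * Var ^ (k / 2)`, with `γₖ` the
`k`-th moment of the standard normal law. For a functional `a` outside all the hyperplanes, some
line `t ↦ a + t • b` meets any prescribed number of them at distinct parameters. Along that line
both sides of the moment identity are polynomials in `t` of degree at most `k`, and they agree at
more than `k` points, hence also at `t = 0`.
-/

section MomentDeterminacy

variable {Ω Ω' : Type*} {mΩ : MeasurableSpace Ω} {mΩ' : MeasurableSpace Ω'}
  {P : Measure Ω} {P' : Measure Ω'} {X : Ω → ℝ} {Y : Ω' → ℝ}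

theorem mgf_eventuallyEq_of_moment_eq (hX : 0 ∈ interior (integrableExpSet X P))
    (hY : 0 ∈ interior (integrableExpSet Y P')) (h : ∀ k, moment X k P = moment Y k P') :
    mgf X P =ᶠ[𝓝 0] mgf Y P' := by
  have hmgfX := hasFPowerSeriesAt_mgf hX
  have hmgfY := hasFPowerSeriesAt_mgf hY
  have hcoeff (k : ℕ) : ∫ ω, X ω ^ k ∂P = ∫ ω, Y ω ^ k ∂P' := h k
  simp only [zero_mul, Real.exp_zero, mul_one, hcoeff] at hmgfX hmgfY
  filter_upwards [hmgfX.eventually_hasSum_sub, hmgfY.eventually_hasSum_sub] with t hXt hYt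
  exact hXt.unique hYt

theorem map_eq_of_moment_eq [IsFiniteMeasure P] [IsFiniteMeasure P']
    (hX : 0 ∈ interior (integrableExpSet X P)) (hY : 0 ∈ interior (integrableExpSet Y P'))
    (h : ∀ k, moment X k P = moment Y k P') : P.map X = P'.map Y := by
  let strip : Set ℂ :=
    {z | z.re ∈ interior (integrableExpSet X P) ∩ interior (integrableExpSet Y P')}
  have hstrip : IsPreconnected strip :=
    ((convex_integrableExpSet.interior.inter convex_integrableExpSet.interior).linear_preimage
      Complex.reLm).isPreconnected
  have hreal : ∃ᶠ t : ℝ in 𝓝[≠] 0, complexMGF X P t = complexMGF Y P' t := by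
    refine Eventually.frequently (eventually_nhdsWithin_of_eventually_nhds ?_)
    filter_upwards [mgf_eventuallyEq_of_moment_eq hX hY h] with t ht
    rw [complexMGF_ofReal, complexMGF_ofReal, ht]
  have hofReal : Tendsto ((↑) : ℝ → ℂ) (𝓝[≠] 0) (𝓝[≠] 0) := by
    simpa using Complex.continuous_ofReal.continuousWithinAt.tendsto_nhdsWithin
      (s := {0}ᶜ) (t := {0}ᶜ) (x := 0) fun t ht => by simpa using ht
  have heq : Set.EqOn (complexMGF X P) (complexMGF Y P') strip :=
    (analyticOnNhd_complexMGF.mono fun z hz => hz.1).eqOn_of_preconnected_of_frequently_eq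
      (analyticOnNhd_complexMGF.mono fun z hz => hz.2) hstrip (z₀ := 0)
      (by simpa [strip] using ⟨hX, hY⟩) (hofReal.frequently hreal)
  refine Measure.ext_of_charFun (funext fun t => ?_)
  rw [← complexMGF_mul_I (aemeasurable_of_mem_interior_integrableExpSet hX),
    ← complexMGF_mul_I (aemeasurable_of_mem_interior_integrableExpSet hY)]
  exact heq (by simpa [strip] using ⟨hX, hY⟩)

end MomentDeterminacy

section ExponentialMoments

variable {Ω : Type*} {mΩ : MeasurableSpace Ω} {P : Measure Ω} {X Y : Ω → ℝ}

theorem mem_integrableExpSet_add {t : ℝ} (hX : AEMeasurable X P) (hY : AEMeasurable Y P)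
    (hXt : 2 * t ∈ integrableExpSet X P) (hYt : 2 * t ∈ integrableExpSet Y P) :
    t ∈ integrableExpSet (X + Y) P := by
  have memLp_two_exp {Z : Ω → ℝ} (hZ : AEMeasurable Z P) (hZt : 2 * t ∈ integrableExpSet Z P) :
      MemLp (fun ω => Real.exp (t * Z ω)) 2 P := by
    rw [memLp_two_iff_integrable_sq (by fun_prop)]
    simpa only [← Real.exp_nat_mul, Nat.cast_ofNat, ← mul_assoc] using! hZt
  have hmul := (memLp_two_exp hX hXt).integrable_mul (memLp_two_exp hY hYt)
  simpa only [integrableExpSet, Set.mem_ofPred_eq, Pi.add_apply, mul_add, Real.exp_add] using! hmul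

theorem integrableExpSet_sub_const (c : ℝ) :
    integrableExpSet (X - fun _ => c) P = integrableExpSet X P := by
  ext t
  have hexp (ω : Ω) : Real.exp (t * (X ω - c)) = Real.exp (t * X ω) * Real.exp (-(t * c)) := by
    rw [← Real.exp_add]; ring_nf
  simp only [integrableExpSet, Set.mem_ofPred_eq, Pi.sub_apply, hexp]
  exact integrable_mul_const_iff (Real.exp_pos _).ne'.isUnit _

theorem integrableExpSet_eq_univ_of_hasGaussianLaw (hX : HasGaussianLaw X P) :
    integrableExpSet X P = Set.univ := by
  refine Set.eq_univ_of_forall fun t => ?_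
  have := integrable_exp_mul_gaussianReal (μ := P[X]) (v := Var[X; P].toNNReal) t
  rwa [← hX.map_eq_gaussianReal, integrable_map_measure (by fun_prop) hX.aemeasurable] at this

end ExponentialMoments

section GaussianMoments

variable {Ω : Type*} {mΩ : MeasurableSpace Ω} {P : Measure Ω} {X : Ω → ℝ}

theorem hasGaussianLaw_of_map_eq_gaussianReal {m : ℝ} {v : NNReal}
    (h : P.map X = gaussianReal m v) : HasGaussianLaw X P :=
  ⟨h ▸ inferInstance⟩

theorem moment_gaussianReal_zero_one_of_odd {k : ℕ} (hk : Odd k) :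
    moment id k (gaussianReal 0 1) = 0 := by
  have hneg : moment id k (gaussianReal 0 1) = -moment id k (gaussianReal 0 1) := by
    conv_lhs => rw [← neg_zero (G := ℝ), ← gaussianReal_map_neg]
    simp only [moment, Pi.pow_apply, id]
    rw [integral_map (by fun_prop) (by fun_prop), ← integral_neg]
    simp only [hk.neg_pow]
  linarith

-- For odd `k` both sides vanish, so the rounding in `k / 2` is harmless.
theorem moment_gaussianReal_zero (v : NNReal) (k : ℕ) :
    moment id k (gaussianReal 0 v) = moment id k (gaussianReal 0 1) * (v : ℝ) ^ (k / 2) := by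
  have hscale : gaussianReal 0 v = (gaussianReal 0 1).map (√(v : ℝ) * ·) := by
    rw [gaussianReal_map_const_mul]
    congr
    · simp
    · ext; simp
  have hmoment : moment id k (gaussianReal 0 v) =
      moment id k (gaussianReal 0 1) * √(v : ℝ) ^ k := by
    rw [hscale]
    simp only [moment, Pi.pow_apply, id]
    rw [integral_map (by fun_prop) (by fun_prop), ← integral_mul_const]
    simp only [mul_pow, mul_comm]
  obtain hk | hk := k.even_or_odd
  · rw [hmoment]
    nth_rw 2 [← Nat.two_mul_div_two_of_even hk]
    rw [pow_mul, Real.sq_sqrt v.coe_nonneg]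
  · rw [hmoment, moment_gaussianReal_zero_one_of_odd hk, zero_mul, zero_mul]

theorem centralMoment_of_hasGaussianLaw (hX : HasGaussianLaw X P) (k : ℕ) :
    centralMoment X k P = moment id k (gaussianReal 0 1) * Var[X; P] ^ (k / 2) := by
  have hlaw : HasLaw X (gaussianReal P[X] Var[X; P].toNNReal) P :=
    ⟨hX.aemeasurable, hX.map_eq_gaussianReal⟩
  have hcentered := gaussianReal_sub_const hlaw P[X]
  rw [sub_self] at hcentered
  rw [← Real.coe_toNNReal _ (variance_nonneg X P), ← moment_gaussianReal_zero,
    ← hcentered.map_eq, moment, integral_map hcentered.aemeasurable (by fun_prop)]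
  rfl

theorem hasGaussianLaw_of_centralMoment_eq [IsProbabilityMeasure P]
    (hX : 0 ∈ interior (integrableExpSet X P))
    (h : ∀ k, centralMoment X k P = moment id k (gaussianReal 0 1) * Var[X; P] ^ (k / 2)) :
    HasGaussianLaw X P := by
  have hmap : P.map (X - fun _ => P[X]) = (gaussianReal 0 Var[X; P].toNNReal).map id := by
    refine map_eq_of_moment_eq (by rwa [integrableExpSet_sub_const]) (by simp) fun k => ?_
    rw [moment_gaussianReal_zero, Real.coe_toNNReal _ (variance_nonneg X P)]
    exact h k
  have hcentered : HasLaw (X - fun _ => P[X]) (gaussianReal 0 Var[X; P].toNNReal) P :=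
    ⟨(aemeasurable_of_mem_interior_integrableExpSet hX).sub_const _, by rw [hmap, Measure.map_id]⟩
  simpa using (gaussianReal_add_const hcentered P[X]).hasGaussianLaw

end GaussianMoments

section MomentsAlongLine

variable {Ω : Type*} {mΩ : MeasurableSpace Ω} {P : Measure Ω} {X Y : Ω → ℝ} {k : ℕ}

theorem integrable_pow_mul_pow_sub [IsFiniteMeasure P] (hX : MemLp X k P) (hY : MemLp Y k P)
    {l : ℕ} (hl : l ≤ k) : Integrable (fun ω => X ω ^ l * Y ω ^ (k - l)) P := by
  refine (hX.norm.add hY.norm).integrable_norm_pow'.mono'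
    ((hX.1.pow l).mul (hY.1.pow (k - l))) (ae_of_all _ fun ω => ?_)
  calc ‖X ω ^ l * Y ω ^ (k - l)‖ = ‖X ω‖ ^ l * ‖Y ω‖ ^ (k - l) := by
        rw [norm_mul, norm_pow, norm_pow]
    _ ≤ (‖X ω‖ + ‖Y ω‖) ^ l * (‖X ω‖ + ‖Y ω‖) ^ (k - l) := by
        gcongr <;> simp
    _ = ‖‖X ω‖ + ‖Y ω‖‖ ^ k := by
        rw [← pow_add, Nat.add_sub_of_le hl,
          Real.norm_of_nonneg (r := ‖X ω‖ + ‖Y ω‖) (by positivity)]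

theorem exists_natDegree_le_eval_eq_moment_add_smul [IsFiniteMeasure P] (hX : MemLp X k P)
    (hY : MemLp Y k P) :
    ∃ p : Polynomial ℝ, p.natDegree ≤ k ∧ ∀ t, p.eval t = moment (X + t • Y) k P := by
  refine ⟨∑ l ∈ range (k + 1), Polynomial.monomial (k - l)
    ((∫ ω, X ω ^ l * Y ω ^ (k - l) ∂P) * k.choose l), ?_, fun t => ?_⟩
  · exact Polynomial.natDegree_sum_le_of_forall_le _ _ fun l _ =>
      (Polynomial.natDegree_monomial_le _).trans (Nat.sub_le k l)
  have hexpand (ω : Ω) : (X ω + t * Y ω) ^ k =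
      ∑ l ∈ range (k + 1), X ω ^ l * Y ω ^ (k - l) * (k.choose l * t ^ (k - l)) := by
    rw [add_pow]
    exact sum_congr rfl fun l _ => by ring
  simp only [moment, Pi.pow_apply, Pi.add_apply, Pi.smul_apply, smul_eq_mul, hexpand]
  rw [integral_finsetSum _ fun l hl =>
    (integrable_pow_mul_pow_sub hX hY (mem_range_succ_iff.mp hl)).mul_const _]
  simp only [Polynomial.eval_finsetSum, Polynomial.eval_monomial, integral_mul_const]
  simp only [mul_assoc]

theorem exists_natDegree_le_eval_eq_centralMoment_add_smul [IsFiniteMeasure P]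
    (hX : MemLp X k P) (hY : MemLp Y k P) :
    ∃ p : Polynomial ℝ, p.natDegree ≤ k ∧ ∀ t, p.eval t = centralMoment (X + t • Y) k P := by
  obtain rfl | hk := eq_or_ne k 0
  · exact ⟨.C (P.real Set.univ), by simp, by simp [centralMoment]⟩
  have hone : (1 : ENNReal) ≤ k := by exact_mod_cast Nat.one_le_iff_ne_zero.mpr hk
  have hmean (t : ℝ) : P[X + t • Y] = P[X] + t * P[Y] := by
    simp only [Pi.add_apply, Pi.smul_apply, smul_eq_mul]
    rw [integral_add (hX.integrable hone) ((hY.integrable hone).const_mul t), integral_const_mul]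
  have hcenter (t : ℝ) : (X - fun _ => P[X]) + t • (Y - fun _ => P[Y]) =
      X + t • Y - fun _ => P[X + t • Y] := by
    ext ω
    rw [hmean]
    simp only [Pi.add_apply, Pi.sub_apply, Pi.smul_apply, smul_eq_mul]
    ring
  obtain ⟨p, hdeg, hp⟩ := exists_natDegree_le_eval_eq_moment_add_smul
    (hX.sub (memLp_const P[X])) (hY.sub (memLp_const P[Y]))
  exact ⟨p, hdeg, fun t => by rw [hp, hcenter, moment, centralMoment]⟩

theorem centralMoment_eq_of_card_lt_hasGaussianLaw_add_smul [IsFiniteMeasure P]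
    (hX : MemLp X k P) (hY : MemLp Y k P) (hX₂ : MemLp X 2 P) (hY₂ : MemLp Y 2 P)
    {T : Finset ℝ} (hT : k < #T) (hG : ∀ t ∈ T, HasGaussianLaw (X + t • Y) P) :
    centralMoment X k P = moment id k (gaussianReal 0 1) * Var[X; P] ^ (k / 2) := by
  obtain ⟨p, hpdeg, hp⟩ := exists_natDegree_le_eval_eq_centralMoment_add_smul hX hY
  obtain ⟨q, hqdeg, hq⟩ :=
    exists_natDegree_le_eval_eq_centralMoment_add_smul (k := 2) (mod_cast hX₂) (mod_cast hY₂)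
  have hqvar (t : ℝ) : q.eval t = Var[X + t • Y; P] := by
    rw [hq, centralMoment_two_eq_variance (hX₂.aemeasurable.add (hY₂.aemeasurable.const_smul t))]
  let r : Polynomial ℝ := .C (moment id k (gaussianReal 0 1)) * q ^ (k / 2)
  have hrdeg : r.natDegree ≤ k := calc
    r.natDegree ≤ (q ^ (k / 2)).natDegree := Polynomial.natDegree_C_mul_le _ _
    _ ≤ k / 2 * 2 := Polynomial.natDegree_pow_le_of_le _ hqdeg
    _ ≤ k := Nat.div_mul_le_self k 2
  have hpr : p = r := by
    have degree_lt {s : Polynomial ℝ} (hs : s.natDegree ≤ k) : s.degree < #T :=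
      Polynomial.degree_le_natDegree.trans_lt (mod_cast hs.trans_lt hT)
    refine Polynomial.eq_of_degrees_lt_of_eval_finset_eq T (degree_lt hpdeg) (degree_lt hrdeg)
      fun t ht => ?_
    simp only [r, Polynomial.eval_mul, Polynomial.eval_C, Polynomial.eval_pow]
    rw [hp, hqvar, centralMoment_of_hasGaussianLaw (hG t ht)]
  simpa [r, hp, hqvar] using congrArg (Polynomial.eval 0) hpr

end MomentsAlongLine

theorem isCoatom_of_finrank_add_one_eq {K V : Type*} [DivisionRing K] [AddCommGroup V] [Module K V]
    {S : Submodule K V} (hS : Module.finrank K S + 1 = Module.finrank K V) : IsCoatom S := by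
  have := Module.finite_of_finrank_pos (R := K) (M := V) (by omega)
  have hadd := S.finrank_quotient_add_finrank
  rw [← isSimpleModule_iff_isCoatom, isSimpleModule_iff_finrank_eq_one]
  omega

section Hyperplanes

variable {K V ι : Type*} [Field K] [AddCommGroup V] [Module K V]

theorem exists_ker_eq_of_isCoatom {S : Submodule K V} (hS : IsCoatom S) {a : V} (ha : a ∉ S) :
    ∃ f : V →ₗ[K] K, f a = 1 ∧ LinearMap.ker f = S := by
  obtain ⟨f, hfa, hle⟩ := Submodule.exists_le_ker_of_notMem ha
  refine ⟨(f a)⁻¹ • f, by simp [hfa], ?_⟩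
  rw [LinearMap.ker_smul _ _ (inv_ne_zero hfa)]
  exact (hS.le_iff_eq fun h => hfa (by simp [LinearMap.ker_eq_top.mp h])).mp hle

theorem exists_forall_apply_ne_zero_of_finite [Infinite K] {f : ι → V →ₗ[K] K} {s : Finset ι}
    (hf : ∀ i ∈ s, f i ≠ 0) : ∃ v, ∀ i ∈ s, f i v ≠ 0 := by
  classical
  have hker : ⊤ ∉ s.image fun i => LinearMap.ker (f i) := by
    simpa [LinearMap.ker_eq_top] using hf
  obtain ⟨v, hv⟩ := (Set.ne_univ_iff_exists_notMem _).mp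
    (Subspace.biUnion_ne_univ_of_top_notMem hker)
  exact ⟨v, by simpa using hv⟩

theorem exists_card_eq_forall_add_smul_mem [Infinite K] [Infinite ι] {S : ι → Submodule K V}
    (hS : ∀ j, IsCoatom (S j)) (hinj : Function.Injective S) {a : V} (ha : ∀ j, a ∉ S j)
    (N : ℕ) : ∃ (b : V) (T : Finset K), #T = N ∧ ∀ t ∈ T, ∃ j, a + t • b ∈ S j := by
  classical
  choose f hfa hker using fun j => exists_ker_eq_of_isCoatom (hS j) (ha j)
  obtain ⟨s, hs⟩ := Infinite.exists_subset_card_eq ι N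
  have hf_ne (j : ι) : f j ≠ 0 := fun h => by simpa [h] using hfa j
  have hf_inj : Function.Injective f := fun i j hij => hinj (by rw [← hker, ← hker, hij])
  -- The line `a + t • b` meets `S j` at `t = -(f j b)⁻¹`; `b` is chosen to keep these distinct.
  obtain ⟨b, hb⟩ : ∃ b, ∀ g ∈ s.image f ∪ s.offDiag.image fun ij => f ij.1 - f ij.2, g b ≠ 0 := by
    refine exists_forall_apply_ne_zero_of_finite (f := id) fun g hg => ?_
    simp only [mem_union, mem_image, mem_offDiag] at hg
    obtain ⟨j, -, rfl⟩ | ⟨ij, ⟨-, -, hij⟩, rfl⟩ := hg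
    · exact hf_ne j
    · exact sub_ne_zero.mpr (hf_inj.ne hij)
  have hfb {j : ι} (hj : j ∈ s) : f j b ≠ 0 :=
    hb _ (mem_union_left _ (mem_image_of_mem f hj))
  have hfb_inj : Set.InjOn (fun j => f j b) s := fun i hi j hj hij => by
    by_contra hne
    have hmem : (i, j) ∈ s.offDiag := mem_offDiag.mpr ⟨hi, hj, hne⟩
    exact hb _ (mem_union_right _ (mem_image_of_mem _ hmem)) (sub_eq_zero.mpr hij)
  refine ⟨b, s.image fun j => -(f j b)⁻¹, ?_, fun t ht => ?_⟩
  · rw [card_image_of_injOn fun i hi j hj hij => hfb_inj hi hj (inv_injective (neg_injective hij)),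
      hs]
  · obtain ⟨j, hj, rfl⟩ := mem_image.mp ht
    refine ⟨j, ?_⟩
    rw [← hker j, LinearMap.mem_ker, map_add, map_smul, hfa, smul_eq_mul, neg_mul,
      inv_mul_cancel₀ (hfb hj), add_neg_cancel]

end Hyperplanes

section LinearFamilies

variable {V : Type*} [AddCommGroup V] [Module ℝ V] {Ω : Type*} {mΩ : MeasurableSpace Ω}
  {P : Measure Ω} {X : V →ₗ[ℝ] Ω → ℝ}

theorem integrableExpSet_eq_univ_of_hasGaussianLaw_of_sup_eq_top {S T : Submodule ℝ V}
    (hST : S ⊔ T = ⊤) (hS : ∀ a ∈ S, HasGaussianLaw (X a) P)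
    (hT : ∀ a ∈ T, HasGaussianLaw (X a) P) (a : V) :
    integrableExpSet (X a) P = Set.univ := by
  obtain ⟨u, hu, w, hw, rfl⟩ := Submodule.mem_sup.mp (hST ▸ Submodule.mem_top (x := a))
  refine Set.eq_univ_of_forall fun t => ?_
  rw [map_add]
  exact mem_integrableExpSet_add (hS u hu).aemeasurable (hT w hw).aemeasurable
    (by simp [integrableExpSet_eq_univ_of_hasGaussianLaw (hS u hu)])
    (by simp [integrableExpSet_eq_univ_of_hasGaussianLaw (hT w hw)])

theorem stmt_18_general (X : V →ₗ[ℝ] Ω → ℝ) {ι : Type*} [Infinite ι] (S : ι → Submodule ℝ V)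
    (hS : ∀ j, IsCoatom (S j)) (hinj : Function.Injective S)
    (hG : ∀ j, ∀ a ∈ S j, HasGaussianLaw (X a) P) (a : V) : HasGaussianLaw (X a) P := by
  obtain ⟨i, j, hij⟩ := exists_pair_ne ι
  have hsup : S i ⊔ S j = ⊤ := (hS i).sup_eq_top_of_ne (hS j) (hinj.ne hij)
  have hexp (c : V) : 0 ∈ interior (integrableExpSet (X c) P) := by
    simp [integrableExpSet_eq_univ_of_hasGaussianLaw_of_sup_eq_top hsup (hG i) (hG j)]
  have hLp (c : V) (k : ℕ) : MemLp (X c) k P :=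
    mod_cast memLp_of_mem_interior_integrableExpSet (hexp c) k
  have : IsProbabilityMeasure P := (hG i 0 (S i).zero_mem).isProbabilityMeasure
  by_cases ha : ∃ j, a ∈ S j
  · obtain ⟨j, hj⟩ := ha
    exact hG j a hj
  refine hasGaussianLaw_of_centralMoment_eq (hexp a) fun k => ?_
  obtain ⟨b, T, hT, hmem⟩ :=
    exists_card_eq_forall_add_smul_mem hS hinj (not_exists.mp ha) (k + 1)
  refine centralMoment_eq_of_card_lt_hasGaussianLaw_add_smul (hLp a k) (hLp b k) (hLp a 2)
    (hLp b 2) (T := T) (by omega) fun t ht => ?_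
  obtain ⟨j, hj⟩ := hmem t ht
  rw [← map_smul, ← map_add]
  exact hG j _ hj

end LinearFamilies

section CharacteristicFunction

variable {Ω : Type*} {mΩ : MeasurableSpace Ω} {P : Measure Ω}

theorem integral_cexp_I_mul_of_hasGaussianLaw {X : Ω → ℝ} (hX : HasGaussianLaw X P) :
    ∫ ω, Complex.exp (Complex.I * (X ω : ℂ)) ∂P =
      Complex.exp (Complex.I * ((P[X] : ℝ) : ℂ) - (Var[X; P] : ℂ) / 2) := by
  have hchar := charFun_gaussianReal (μ := P[X]) (v := Var[X; P].toNNReal) 1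
  rw [← hX.map_eq_gaussianReal, charFun_apply_real,
    integral_map hX.aemeasurable (by fun_prop)] at hchar
  simpa only [Complex.ofReal_one, one_mul, one_pow, mul_one, mul_comm Complex.I,
    Real.coe_toNNReal _ (variance_nonneg X P)] using! hchar

variable {ι : Type*} {X : ι → Ω → ℝ}

/-- The covariance matrix of a family of real random variables. -/
noncomputable def covarianceMatrix (X : ι → Ω → ℝ) (P : Measure Ω) : Matrix ι ι ℝ :=
  .of fun i j => cov[X i, X j; P]

theorem variance_fun_sum_const_mul [IsFiniteMeasure P] {s : Finset ι}
    (hX : ∀ i ∈ s, MemLp (X i) 2 P) (t : ι → ℝ) :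
    Var[fun ω => ∑ i ∈ s, t i * X i ω; P] =
      ∑ i ∈ s, ∑ j ∈ s, t i * covarianceMatrix X P i j * t j := by
  rw [variance_fun_sum' fun i hi => (hX i hi).const_mul (t i)]
  refine sum_congr rfl fun i _ => sum_congr rfl fun j _ => ?_
  rw [covariance_const_mul_left, covariance_const_mul_right, covarianceMatrix, Matrix.of_apply]
  ring

theorem posSemidef_covarianceMatrix [IsFiniteMeasure P] (hX : ∀ i, MemLp (X i) 2 P) :
    (covarianceMatrix X P).PosSemidef := by
  refine ⟨Matrix.IsHermitian.ext fun i j => covariance_comm _ _, fun t => ?_⟩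
  exact (variance_nonneg _ P).trans_eq (variance_fun_sum_const_mul (fun i _ => hX i) t)

theorem integral_cexp_I_mul_sum_of_hasGaussianLaw [Fintype ι] [IsFiniteMeasure P]
    (hX : ∀ i, MemLp (X i) 2 P) {t : ι → ℝ}
    (ht : HasGaussianLaw (fun ω => ∑ i, t i * X i ω) P) :
    ∫ ω, Complex.exp (Complex.I * ((∑ i, t i * X i ω : ℝ) : ℂ)) ∂P =
      Complex.exp (Complex.I * ((∑ i, P[X i] * t i : ℝ) : ℂ) -
        ((∑ i, ∑ j, t i * covarianceMatrix X P i j * t j : ℝ) : ℂ) / 2) := by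
  have hmean : ∫ ω, ∑ i, t i * X i ω ∂P = ∑ i, P[X i] * t i := by
    rw [integral_finsetSum _ fun i _ => ((hX i).integrable one_le_two).const_mul (t i)]
    simp only [mul_comm (t _), integral_mul_const]
  rw [integral_cexp_I_mul_of_hasGaussianLaw ht, hmean,
    variance_fun_sum_const_mul fun i _ => hX i]

end CharacteristicFunction

/-- If the orthogonal projection of a probability measure μ on ℝⁿ onto each of countably
infinitely many pairwise distinct (n−1)-dimensional subspaces is Gaussian, then μ is
Gaussian: its characteristic function is t ↦ exp(i mᵀt − tᵀΣt/2) for some mean m and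
positive semidefinite Σ; equivalently every linear functional of μ is (possibly
degenerately) normally distributed. -/
theorem stmt_18 (n : ℕ) (hn : 2 ≤ n) (μ : Measure (Fin n → ℝ)) [IsProbabilityMeasure μ]
    (S : ℕ → Submodule ℝ (Fin n → ℝ))
    (hdim : ∀ j, Module.finrank ℝ (S j) = n - 1)
    (hdist : ∀ j i, j ≠ i → S j ≠ S i)
    (hG : ∀ j, ∀ a ∈ S j, ∃ (m : ℝ) (v : NNReal),
      Measure.map (fun x => ∑ i, a i * x i) μ = gaussianReal m v) :
    (∃ (m : Fin n → ℝ) (Sig : Matrix (Fin n) (Fin n) ℝ), Sig.PosSemidef ∧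
      ∀ t : Fin n → ℝ,
        (∫ x, Complex.exp (Complex.I * ((∑ i, t i * x i : ℝ) : ℂ)) ∂μ)
          = Complex.exp (Complex.I * ((∑ i, m i * t i : ℝ) : ℂ)
              - ((∑ i, ∑ j, t i * Sig i j * t j : ℝ) : ℂ) / 2)) ∧
    ∀ a : Fin n → ℝ, ∃ (m : ℝ) (v : NNReal),
      Measure.map (fun x => ∑ i, a i * x i) μ = gaussianReal m v := by
  let X : (Fin n → ℝ) →ₗ[ℝ] (Fin n → ℝ) → ℝ :=
    LinearMap.ltoFun ℝ (Fin n → ℝ) ℝ ℝ ∘ₗ dotProductBilin ℝ ℝ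
  have hX (a : Fin n → ℝ) : X a = fun x => ∑ i, a i * x i := rfl
  have hcoatom (j : ℕ) : IsCoatom (S j) :=
    isCoatom_of_finrank_add_one_eq (by rw [hdim, Module.finrank_fin_fun]; omega)
  have hGauss (a : Fin n → ℝ) : HasGaussianLaw (fun x => ∑ i, a i * x i) μ := by
    rw [← hX]
    refine stmt_18_general X S hcoatom (fun i j hij => ?_) (fun j a ha => ?_) a
    · exact not_imp_not.mp (hdist i j) hij
    · rw [hX]
      obtain ⟨m, v, h⟩ := hG j a ha
      exact hasGaussianLaw_of_map_eq_gaussianReal h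
  have hcoord (i : Fin n) : MemLp (fun x : Fin n → ℝ => x i) 2 μ := by
    simpa [Pi.single_apply] using (hGauss (Pi.single i 1)).memLp_two
  have hcharFun (t : Fin n → ℝ) :=
    integral_cexp_I_mul_sum_of_hasGaussianLaw (P := μ) hcoord (hGauss t)
  exact ⟨⟨_, _, posSemidef_covarianceMatrix hcoord, hcharFun⟩,
    fun a => ⟨_, _, (hGauss a).map_eq_gaussianReal⟩⟩
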